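/- The infinite series identity 15π/(4√3) = Σ_{k=0}^{∞} (-1/27)^k · [(1/2)_k (2/3)_k (1)_k] / [(4/3)_k (4/3)_k (11/6)_k] · (21k² + 26k + 7) holds, where the sum is over natural numbers k and all quantities are real numbers. -/

import Mathlib

noncomputable def risingFactorial (a : ℝ) (k : ℕ) : ℝ := ∏ i ∈ Finset.range k, (a + i)

/-!
The series is the boundary sum of a Wilf–Zeilberger pair. Dougall's well-poised series
`∑ k, (a + 2k) (b)ₖ (c)ₖ (d)ₖ (-1)ᵏ / ((1 + a - b)ₖ (1 + a - c)ₖ (1 + a - d)ₖ)`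
at `a = 3n + 4/3`, `b = n + 1`, `c = n + 2/3`, `d = 1/3`, suitably normalised, has terms `F n k`
with a rational `R` such that `F n k - F (n + 1) k = R n k * F n k - R n (k + 1) * F n (k + 1)`.
Since `F` decays geometrically in `n`, summing over the quadrant gives
`∑ n, R n 0 * F n 0 = ∑ k, F 0 k`. The left side is the required series. The right side is
`45/4 * ∑ k, (-1)ᵏ (1 / (3k + 1) - 1 / (3k + 3)) = 45/4 * ∫₀¹ (1 - x²) / (1 + x³) dx`.
-/

open Filter Finset Topology MeasureTheory

section WilfZeilberger

theorem tsum_sub_tsum_of_forall_sub_eq {M : Type*} [AddCommGroup M] [TopologicalSpace M]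
    [IsTopologicalAddGroup M] [T2Space M] {f g h : ℕ → M} (hf : Summable f) (hg : Summable g)
    (hh : Tendsto h atTop (𝓝 0)) (hfgh : ∀ k, f k - g k = h k - h (k + 1)) :
    ∑' k, f k - ∑' k, g k = h 0 := by
  refine tendsto_nhds_unique (hf.hasSum.sub hg.hasSum).tendsto_sum_nat ?_
  simp only [hfgh, sum_range_sub']
  simpa using hh.const_sub (h 0)

variable {E : Type*} [NormedAddCommGroup E] [CompleteSpace E]

theorem hasSum_of_wilfZeilberger {F G : ℕ → ℕ → E} {r C : ℝ} (hr₀ : 0 ≤ r) (hr₁ : r < 1)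
    (hF₀ : Summable fun k => ‖F 0 k‖) (hF : ∀ n k, ‖F (n + 1) k‖ ≤ r * ‖F n k‖)
    (hG : ∀ n k, ‖G n k‖ ≤ C * ‖F n k‖)
    (hFG : ∀ n k, F n k - F (n + 1) k = G n k - G n (k + 1)) :
    HasSum (fun n => G n 0) (∑' k, F 0 k) := by
  have norm_F_le (n k : ℕ) : ‖F n k‖ ≤ r ^ n * ‖F 0 k‖ :=
    le_geom (u := fun n => ‖F n k‖) hr₀ n fun i _ => hF i k
  have summable_norm_F (n : ℕ) : Summable fun k => ‖F n k‖ :=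
    (hF₀.mul_left (r ^ n)).of_nonneg_of_le (fun _ => norm_nonneg _) (norm_F_le n)
  have summable_F (n : ℕ) : Summable (F n) := (summable_norm_F n).of_norm
  have tendsto_G (n : ℕ) : Tendsto (G n) atTop (𝓝 0) :=
    squeeze_zero_norm (hG n) (by simpa using (summable_norm_F n).tendsto_atTop_zero.const_mul C)
  have tendsto_tsum_F : Tendsto (fun n => ∑' k, F n k) atTop (𝓝 0) := by
    refine squeeze_zero_norm
      (fun n => tsum_of_norm_bounded (hF₀.mul_left (r ^ n)).hasSum (norm_F_le n)) ?_
    simpa [tsum_mul_left] using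
      (tendsto_pow_atTop_nhds_zero_of_lt_one hr₀ hr₁).mul_const (∑' k, ‖F 0 k‖)
  have G_zero (n : ℕ) : G n 0 = ∑' k, F n k - ∑' k, F (n + 1) k :=
    (tsum_sub_tsum_of_forall_sub_eq (summable_F n) (summable_F (n + 1)) (tendsto_G n)
      (hFG n)).symm
  have summable_G : Summable fun n => G n 0 := by
    have summable_F_zero : Summable fun n => ‖F n 0‖ :=
      ((summable_geometric_of_lt_one hr₀ hr₁).mul_right ‖F 0 0‖).of_nonneg_of_le
        (fun _ => norm_nonneg _) (norm_F_le · 0)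
    exact (summable_F_zero.mul_left C).of_norm_bounded (hG · 0)
  rw [summable_G.hasSum_iff_tendsto_nat]
  simp only [G_zero, sum_range_sub' fun n => ∑' k, F n k]
  simpa using tendsto_tsum_F.const_sub (∑' k, F 0 k)

end WilfZeilberger

section AlternatingSeries

variable {m a b : ℕ}

theorem summable_one_div_sub_one_div (hm : m ≠ 0) (hab : a ≤ b) :
    Summable fun k : ℕ => 1 / ((m : ℝ) * k + a + 1) - 1 / (m * k + b + 1) := by
  have one_le_m : (1 : ℝ) ≤ m := by exact_mod_cast Nat.one_le_iff_ne_zero.mpr hm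
  have b_sub_a_nonneg : (0 : ℝ) ≤ b - a := sub_nonneg.mpr (by exact_mod_cast hab)
  have summable_inv_sq : Summable fun k : ℕ => (b - a : ℝ) * (1 / ((k : ℝ) + 1) ^ 2) := by
    refine Summable.mul_left _ ?_
    exact_mod_cast (summable_nat_add_iff 1).mpr (Real.summable_one_div_nat_pow.mpr one_lt_two)
  have sub_eq (k : ℕ) : 1 / ((m : ℝ) * k + a + 1) - 1 / (m * k + b + 1) =
      (b - a) * (1 / ((m * k + a + 1) * (m * k + b + 1))) := by
    field_simp
    ring
  refine summable_inv_sq.of_nonneg_of_le (fun k => ?_) fun k => ?_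
  · rw [sub_eq]
    positivity
  · have le_add (c : ℕ) : (k : ℝ) + 1 ≤ m * k + c + 1 := by
      linarith [le_mul_of_one_le_left k.cast_nonneg one_le_m, (c.cast_nonneg : (0 : ℝ) ≤ c)]
    rw [sub_eq, sq]
    exact mul_le_mul_of_nonneg_left (one_div_le_one_div_of_le (by positivity)
      (mul_le_mul (le_add a) (le_add b) (by positivity) (by positivity))) b_sub_a_nonneg

theorem hasSum_alternating_pow_sub_pow (hm : m ≠ 0) {x : ℝ} (hx₀ : 0 ≤ x) (hx₁ : x ≤ 1) :
    HasSum (fun k : ℕ => (-1) ^ k * (x ^ (m * k + a) - x ^ (m * k + b)))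
      ((x ^ a - x ^ b) / (1 + x ^ m)) := by
  rcases hx₁.eq_or_lt with rfl | hx₁
  · simp [hasSum_zero]
  have abs_lt_one : |-x ^ m| < 1 := by
    rw [abs_neg, abs_of_nonneg (by positivity)]
    exact pow_lt_one₀ hx₀ hx₁ hm
  have term_eq (k : ℕ) :
      (-1) ^ k * (x ^ (m * k + a) - x ^ (m * k + b)) = (x ^ a - x ^ b) * (-x ^ m) ^ k := by
    rw [neg_pow (x ^ m), ← pow_mul, pow_add, pow_add]
    ring
  simpa only [term_eq, sub_neg_eq_add, ← div_eq_mul_inv] using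
    (hasSum_geometric_of_abs_lt_one abs_lt_one).mul_left (x ^ a - x ^ b)

theorem integral_pow_sub_pow (k : ℕ) :
    ∫ x in (0 : ℝ)..1, (x ^ (m * k + a) - x ^ (m * k + b)) =
      1 / (m * k + a + 1) - 1 / (m * k + b + 1) := by
  rw [intervalIntegral.integral_sub (Continuous.intervalIntegrable (by fun_prop) _ _)
    (Continuous.intervalIntegrable (by fun_prop) _ _), integral_pow, integral_pow]
  simp

theorem hasSum_alternating_one_div_sub_one_div (hm : m ≠ 0) (hab : a ≤ b) :
    HasSum (fun k : ℕ => (-1 : ℝ) ^ k * (1 / (m * k + a + 1) - 1 / (m * k + b + 1)))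
      (∫ x in (0 : ℝ)..1, (x ^ a - x ^ b) / (1 + x ^ m)) := by
  let f (k : ℕ) (x : ℝ) : ℝ := (-1) ^ k * (x ^ (m * k + a) - x ^ (m * k + b))
  have integrable_f (k : ℕ) : IntegrableOn (f k) (Set.Ioc 0 1) :=
    (Continuous.intervalIntegrable (by fun_prop) 0 1).1
  have integral_f (k : ℕ) : ∫ x in Set.Ioc 0 1, f k x =
      (-1) ^ k * (1 / (m * k + a + 1) - 1 / (m * k + b + 1)) := by
    rw [← intervalIntegral.integral_of_le zero_le_one, intervalIntegral.integral_const_mul,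
      integral_pow_sub_pow]
  have integral_norm_f (k : ℕ) : ∫ x in Set.Ioc 0 1, ‖f k x‖ =
      1 / (m * k + a + 1) - 1 / (m * k + b + 1) := by
    rw [← integral_pow_sub_pow, intervalIntegral.integral_of_le zero_le_one]
    refine setIntegral_congr_fun measurableSet_Ioc fun x hx => ?_
    have pow_le : x ^ (m * k + b) ≤ x ^ (m * k + a) :=
      pow_le_pow_of_le_one hx.1.le hx.2 (by gcongr)
    simp [f, abs_of_nonneg (sub_nonneg.mpr pow_le)]
  have tsum_f : ∫ x in Set.Ioc 0 1, ∑' k, f k x =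
      ∫ x in (0 : ℝ)..1, (x ^ a - x ^ b) / (1 + x ^ m) := by
    rw [intervalIntegral.integral_of_le zero_le_one]
    exact setIntegral_congr_fun measurableSet_Ioc fun x hx =>
      (hasSum_alternating_pow_sub_pow hm hx.1.le hx.2).tsum_eq
  rw [← tsum_f]
  simp only [← integral_f]
  refine hasSum_integral_of_summable_integral_norm integrable_f ?_
  simpa only [integral_norm_f] using summable_one_div_sub_one_div hm hab

theorem hasDerivAt_arctan_sub_log (x : ℝ) :
    HasDerivAt
      (fun x => 1 / √3 * Real.arctan ((2 * x - 1) / √3) - 1 / 2 * Real.log (x ^ 2 - x + 1))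
      ((1 - x) / (x ^ 2 - x + 1)) x := by
  have quadratic_pos : 0 < x ^ 2 - x + 1 := by nlinarith [sq_nonneg (2 * x - 1)]
  have sq_sqrt_three : √3 ^ 2 = (3 : ℝ) := Real.sq_sqrt (by norm_num)
  have hasDerivAt_affine : HasDerivAt (fun x : ℝ => (2 * x - 1) / √3) (2 / √3) x := by
    simpa using (((hasDerivAt_id x).const_mul 2).sub_const 1).div_const √3
  have hasDerivAt_quadratic : HasDerivAt (fun x : ℝ => x ^ 2 - x + 1) (2 * x - 1) x := by
    simpa using (((hasDerivAt_id x).pow 2).sub (hasDerivAt_id x)).add_const 1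
  refine ((hasDerivAt_affine.arctan.const_mul (1 / √3)).sub
    ((hasDerivAt_quadratic.log quadratic_pos.ne').const_mul (1 / 2))).congr_deriv ?_
  have one_add_sq : 1 + ((2 * x - 1) / √3) ^ 2 = 4 * (x ^ 2 - x + 1) / 3 := by
    rw [div_pow, sq_sqrt_three]
    ring
  rw [one_add_sq]
  field_simp
  rw [sq_sqrt_three]
  ring

theorem integral_one_sub_sq_div_one_add_cube :
    ∫ x in (0 : ℝ)..1, (1 - x ^ 2) / (1 + x ^ 3) = Real.pi / (3 * √3) := by
  have quadratic_ne_zero (x : ℝ) : x ^ 2 - x + 1 ≠ 0 := by nlinarith [sq_nonneg (2 * x - 1)]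
  have cancel_one_add : ∫ x in (0 : ℝ)..1, (1 - x ^ 2) / (1 + x ^ 3) =
      ∫ x in (0 : ℝ)..1, (1 - x) / (x ^ 2 - x + 1) := by
    refine intervalIntegral.integral_congr fun x hx => ?_
    rw [Set.uIcc_of_le zero_le_one] at hx
    have one_add_ne_zero : 1 + x ^ 3 ≠ 0 := by have := hx.1; positivity
    rw [div_eq_div_iff one_add_ne_zero (quadratic_ne_zero x)]
    ring
  have continuous_integrand : Continuous fun x : ℝ => (1 - x) / (x ^ 2 - x + 1) :=
    Continuous.div (by fun_prop) (by fun_prop) quadratic_ne_zero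
  rw [cancel_one_add, intervalIntegral.integral_eq_sub_of_hasDerivAt
    (fun x _ => hasDerivAt_arctan_sub_log x) (continuous_integrand.intervalIntegrable _ _)]
  norm_num [neg_div, Real.arctan_neg, Real.arctan_inv_sqrt_three]
  field_simp
  ring

theorem hasSum_alternating_one_div_three_mul_add :
    HasSum (fun k : ℕ => (-1 : ℝ) ^ k * (1 / (3 * k + 1) - 1 / (3 * k + 3)))
      (Real.pi / (3 * √3)) := by
  rw [← integral_one_sub_sq_div_one_add_cube]
  simpa [add_assoc, two_add_one_eq_three] using
    hasSum_alternating_one_div_sub_one_div three_ne_zero (Nat.zero_le 2)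

end AlternatingSeries

section RisingFactorial

theorem risingFactorial_zero (a : ℝ) : risingFactorial a 0 = 1 :=
  prod_range_zero _

theorem risingFactorial_succ (a : ℝ) (k : ℕ) :
    risingFactorial a (k + 1) = risingFactorial a k * (a + k) :=
  prod_range_succ _ _

theorem risingFactorial_pos {a : ℝ} (ha : 0 < a) (k : ℕ) : 0 < risingFactorial a k :=
  prod_pos fun _ _ => by positivity

theorem risingFactorial_add (a : ℝ) (j k : ℕ) :
    risingFactorial a (j + k) = risingFactorial a j * risingFactorial (a + j) k := by
  simp only [risingFactorial, prod_range_add, Nat.cast_add, add_assoc]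

theorem risingFactorial_add_natCast {a : ℝ} (ha : 0 < a) (j k : ℕ) :
    risingFactorial (a + j) k =
      risingFactorial a k * (risingFactorial (a + k) j / risingFactorial a j) := by
  rw [← mul_div_assoc, ← risingFactorial_add, eq_div_iff (risingFactorial_pos ha j).ne',
    mul_comm, ← risingFactorial_add, add_comm]

end RisingFactorial

section DougallPair

/-- The hypergeometric coefficient of `21 * n ^ 2 + 26 * n + 7` in the series. -/
noncomputable def hypergeometricCoeff (n : ℕ) : ℝ :=
  (-1/27 : ℝ) ^ n * (risingFactorial (1/2) n * risingFactorial (2/3) n * risingFactorial 1 n) /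
    (risingFactorial (4/3) n * risingFactorial (4/3) n * risingFactorial (11/6) n)

/-- The first member of the Wilf–Zeilberger pair: the `k`-th term of Dougall's well-poised series
with `a = 3n + 4/3`, `b = n + 1`, `c = n + 2/3`, `d = 1/3`, so that `9n + 6k + 4 = 3(a + 2k)`,
times a factor depending only on `n`. -/
noncomputable def dougallTerm (n k : ℕ) : ℝ :=
  3 / 8 * hypergeometricCoeff n * (6 * n + 5) * (9 * n + 6 * k + 4) * (-1) ^ k *
    (risingFactorial (n + 1) k * risingFactorial (n + 2/3) k * risingFactorial (1/3) k) /
    (risingFactorial (2 * n + 4/3) k * risingFactorial (2 * n + 5/3) k *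
      risingFactorial (3 * n + 2) k)

/-- The ratio `-dougallTerm (n + 1) k / dougallTerm n k`. -/
noncomputable def dougallRatioLeft (n k : ℝ) : ℝ :=
  (4 * (n + 1) * (2 * n + 1) * (3 * n + 2) ^ 2 * (6 * n + 7) * (n + k + 1) * (3 * n + 3 * k + 2) *
      (9 * n + 6 * k + 13)) /
    ((3 * n + k + 2) * (3 * n + k + 3) * (3 * n + k + 4) * (6 * n + 3 * k + 4) *
      (6 * n + 3 * k + 5) * (6 * n + 3 * k + 7) * (6 * n + 3 * k + 8) * (9 * n + 6 * k + 4))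

/-- The ratio `-dougallTerm n (k + 1) / dougallTerm n k`. -/
noncomputable def dougallRatioRight (n k : ℝ) : ℝ :=
  ((3 * k + 1) * (n + k + 1) * (3 * n + 3 * k + 2) * (9 * n + 6 * k + 10)) /
    ((3 * n + k + 2) * (6 * n + 3 * k + 4) * (6 * n + 3 * k + 5) * (9 * n + 6 * k + 4))

/-- The Wilf–Zeilberger certificate: the rational function by which `dougallTerm` is multiplied to
obtain the second member of the pair. -/
noncomputable def dougallCertificate (n k : ℝ) : ℝ :=
  ((9072 * n ^ 5 + 32400 * n ^ 4 + 45360 * n ^ 3 + 31056 * n ^ 2 + 10368 * n + 1344) +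
      (20088 * n ^ 4 + 57348 * n ^ 3 + 60075 * n ^ 2 + 27309 * n + 4530) * k +
      (16524 * n ^ 3 + 35100 * n ^ 2 + 24228 * n + 5421) * k ^ 2 +
      (6237 * n ^ 2 + 8721 * n + 2961) * k ^ 3 + (1134 * n + 783) * k ^ 4 + 81 * k ^ 5) /
    (3 * (3 * n + k + 2) * (3 * n + k + 3) * (6 * n + 3 * k + 4) * (6 * n + 3 * k + 5) *
      (9 * n + 6 * k + 4))

theorem hypergeometricCoeff_zero : hypergeometricCoeff 0 = 1 := by
  simp [hypergeometricCoeff, risingFactorial]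

theorem hypergeometricCoeff_succ (n : ℕ) :
    hypergeometricCoeff (n + 1) = -hypergeometricCoeff n *
      ((n + 1) * (2 * n + 1) * (3 * n + 2) / (3 * (3 * n + 4) ^ 2 * (6 * n + 11))) := by
  simp only [hypergeometricCoeff, risingFactorial_succ, pow_succ]
  field_simp
  ring

theorem dougallTerm_succ_left (n k : ℕ) :
    dougallTerm (n + 1) k = -dougallRatioLeft n k * dougallTerm n k := by
  have shift_b : (↑(n + 1) + 1 : ℝ) = n + 1 + (1 : ℕ) := by push_cast; ring
  have shift_c : (↑(n + 1) + 2/3 : ℝ) = n + 2/3 + (1 : ℕ) := by push_cast; ring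
  have shift_ab : (2 * ↑(n + 1) + 4/3 : ℝ) = 2 * n + 4/3 + (2 : ℕ) := by push_cast; ring
  have shift_ac : (2 * ↑(n + 1) + 5/3 : ℝ) = 2 * n + 5/3 + (2 : ℕ) := by push_cast; ring
  have shift_ad : (3 * ↑(n + 1) + 2 : ℝ) = 3 * n + 2 + (3 : ℕ) := by push_cast; ring
  unfold dougallTerm dougallRatioLeft
  rw [hypergeometricCoeff_succ, shift_b, shift_c, shift_ab, shift_ac, shift_ad,
    risingFactorial_add_natCast (a := n + 1) (by positivity) 1,
    risingFactorial_add_natCast (a := n + 2/3) (by positivity) 1,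
    risingFactorial_add_natCast (a := 2 * n + 4/3) (by positivity) 2,
    risingFactorial_add_natCast (a := 2 * n + 5/3) (by positivity) 2,
    risingFactorial_add_natCast (a := 3 * n + 2) (by positivity) 3]
  simp only [risingFactorial_succ _ 0, risingFactorial_succ _ 1, risingFactorial_succ _ 2,
    risingFactorial_zero]
  push_cast
  simp only [add_zero, one_mul]
  field_simp
  ring

theorem dougallTerm_succ_right (n k : ℕ) :
    dougallTerm n (k + 1) = -dougallRatioRight n k * dougallTerm n k := by
  simp only [dougallTerm, dougallRatioRight, risingFactorial_succ, pow_succ]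
  push_cast
  field_simp
  ring

theorem dougallTerm_zero_left (k : ℕ) :
    dougallTerm 0 k = 45 / 4 * ((-1) ^ k * (1 / (3 * k + 1) - 1 / (3 * k + 3))) := by
  have pochhammer_d_ne_zero := (risingFactorial_pos (a := 1/3) (by norm_num) k).ne'
  have pochhammer_c_ne_zero := (risingFactorial_pos (a := 2/3) (by norm_num) k).ne'
  have pochhammer_b_ne_zero := (risingFactorial_pos (a := 1) (by norm_num) k).ne'
  have shift_ab : (2 * (0 : ℕ) + 4/3 : ℝ) = 1/3 + (1 : ℕ) := by norm_num
  have shift_ac : (2 * (0 : ℕ) + 5/3 : ℝ) = 2/3 + (1 : ℕ) := by norm_num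
  have shift_ad : (3 * (0 : ℕ) + 2 : ℝ) = 1 + (1 : ℕ) := by norm_num
  unfold dougallTerm
  rw [hypergeometricCoeff_zero, shift_ab, shift_ac, shift_ad,
    risingFactorial_add_natCast (a := 1/3) (by norm_num) 1,
    risingFactorial_add_natCast (a := 2/3) (by norm_num) 1,
    risingFactorial_add_natCast (a := 1) (by norm_num) 1]
  simp only [risingFactorial_succ _ 0, risingFactorial_zero]
  push_cast
  simp only [zero_add, mul_zero, add_zero]
  field_simp
  ring

section RationalFunctions

variable {n k : ℝ}

theorem dougallRatioLeft_nonneg (hn : 0 ≤ n) (hk : 0 ≤ k) : 0 ≤ dougallRatioLeft n k := by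
  unfold dougallRatioLeft
  positivity

theorem dougallRatioLeft_le (hn : 0 ≤ n) (hk : 0 ≤ k) : dougallRatioLeft n k ≤ 3 / 4 := by
  unfold dougallRatioLeft
  -- After clearing denominators, the difference of the two sides has nonnegative coefficients.
  rw [div_le_iff₀ (by positivity), ← sub_nonneg]
  ring_nf
  positivity

theorem dougallCertificate_nonneg (hn : 0 ≤ n) (hk : 0 ≤ k) : 0 ≤ dougallCertificate n k := by
  unfold dougallCertificate
  positivity

theorem dougallCertificate_le (hn : 0 ≤ n) (hk : 0 ≤ k) : dougallCertificate n k ≤ 2 := by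
  unfold dougallCertificate
  rw [div_le_iff₀ (by positivity), ← sub_nonneg]
  ring_nf
  positivity

theorem one_add_dougallRatioLeft (hn : 0 ≤ n) (hk : 0 ≤ k) :
    1 + dougallRatioLeft n k =
      dougallCertificate n k + dougallRatioRight n k * dougallCertificate n (k + 1) := by
  unfold dougallRatioLeft dougallRatioRight dougallCertificate
  rw [show 3 * n + (k + 1) + 2 = 3 * n + k + 3 by ring,
    show 3 * n + (k + 1) + 3 = 3 * n + k + 4 by ring,
    show 6 * n + 3 * (k + 1) + 4 = 6 * n + 3 * k + 7 by ring,
    show 6 * n + 3 * (k + 1) + 5 = 6 * n + 3 * k + 8 by ring,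
    show 9 * n + 6 * (k + 1) + 4 = 9 * n + 6 * k + 10 by ring]
  field_simp
  ring

end RationalFunctions

theorem dougallTerm_sub_dougallTerm_succ (n k : ℕ) :
    dougallTerm n k - dougallTerm (n + 1) k =
      dougallCertificate n k * dougallTerm n k -
        dougallCertificate n (k + 1 : ℕ) * dougallTerm n (k + 1) := by
  rw [dougallTerm_succ_left, dougallTerm_succ_right]
  push_cast
  linear_combination dougallTerm n k *
    one_add_dougallRatioLeft (n.cast_nonneg (α := ℝ)) k.cast_nonneg

theorem dougallCertificate_mul_dougallTerm_zero_right (n : ℕ) :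
    dougallCertificate n 0 * dougallTerm n 0 =
      hypergeometricCoeff n * (21 * (n : ℝ) ^ 2 + 26 * n + 7) := by
  simp only [dougallCertificate, dougallTerm, risingFactorial_zero, Nat.cast_zero, mul_zero,
    add_zero, pow_zero]
  field_simp
  ring

theorem hasSum_dougallTerm_zero_left :
    HasSum (dougallTerm 0) (15 * Real.pi / (4 * √3)) := by
  have value_eq : 15 * Real.pi / (4 * √3) = 45 / 4 * (Real.pi / (3 * √3)) := by ring
  rw [funext dougallTerm_zero_left, value_eq]
  exact hasSum_alternating_one_div_three_mul_add.mul_left (45 / 4)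

theorem hasSum_hypergeometricCoeff_mul :
    HasSum (fun n : ℕ => hypergeometricCoeff n * (21 * (n : ℝ) ^ 2 + 26 * n + 7))
      (15 * Real.pi / (4 * √3)) := by
  simp only [← dougallCertificate_mul_dougallTerm_zero_right,
    ← hasSum_dougallTerm_zero_left.tsum_eq]
  have norm_succ_le (n k : ℕ) : ‖dougallTerm (n + 1) k‖ ≤ 3 / 4 * ‖dougallTerm n k‖ := by
    rw [dougallTerm_succ_left, norm_mul, norm_neg,
      Real.norm_of_nonneg (dougallRatioLeft_nonneg n.cast_nonneg k.cast_nonneg)]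
    gcongr
    exact dougallRatioLeft_le n.cast_nonneg k.cast_nonneg
  have norm_certificate_mul_le (n k : ℕ) :
      ‖dougallCertificate n k * dougallTerm n k‖ ≤ 2 * ‖dougallTerm n k‖ := by
    rw [norm_mul, Real.norm_of_nonneg (dougallCertificate_nonneg n.cast_nonneg k.cast_nonneg)]
    gcongr
    exact dougallCertificate_le n.cast_nonneg k.cast_nonneg
  simpa only [Nat.cast_zero] using hasSum_of_wilfZeilberger (by norm_num) (by norm_num)
    hasSum_dougallTerm_zero_left.summable.norm norm_succ_le norm_certificate_mul_le
    dougallTerm_sub_dougallTerm_succ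

end DougallPair

theorem stmt_15 :
    15 * Real.pi / (4 * Real.sqrt 3) =
      ∑' k : ℕ, (-1/27 : ℝ) ^ k * (risingFactorial (1/2) k * risingFactorial (2/3) k * risingFactorial (1) k) /
        (risingFactorial (4/3) k * risingFactorial (4/3) k * risingFactorial (11/6) k) * (21 * (k:ℝ)^2 + 26 * (k:ℝ) + 7) :=
  hasSum_hypergeometricCoeff_mul.tsum_eq.symm
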